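/- Let 0 < P₁ < P₂ < ⋯ < P_M be powers with M ≥ 3. Then the consecutive thresholds t_k := g₀*(P_k, P_{k+1}), for k = 1, …, M−1, form a strictly decreasing sequence: t₁ > t₂ > ⋯ > t_{M−1}. -/

import Mathlib

/-- The decisional threshold between two power decisions. -/
noncomputable def g0 (c σ2 Pi Pj : ℝ) : ℝ :=
  c * σ2 * (1 / Pi - 1 / Pj) / (Real.log Pj - Real.log Pi)

/-!
The threshold `g0 c σ2 a b` is `c * σ2` times the logarithmic mean of `1 / a` and `1 / b`. By
`log t < t - 1` this mean lies strictly between its arguments, so for the pair `(a, b)` it exceeds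
`1 / b`, while for a pair of larger powers `(a', b')` with `b ≤ a'` it is below `1 / a' ≤ 1 / b`.
-/

/-- The logarithmic mean of two positive reals, of which the thresholds `g0` are multiples. It is
encoded as a quotient of differences, so `logMean x x` is `0 / 0 = 0`, not the limit value `x`. -/
noncomputable def logMean (x y : ℝ) : ℝ :=
  (y - x) / (Real.log y - Real.log x)

lemma log_sub_log_lt_sub_div {x y : ℝ} (hx : 0 < x) (hy : 0 < y) (hxy : x ≠ y) :
    Real.log y - Real.log x < (y - x) / x := by
  have hne : y / x ≠ 1 := (div_eq_one_iff_eq hx.ne').not.mpr hxy.symm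
  calc Real.log y - Real.log x = Real.log (y / x) := (Real.log_div hy.ne' hx.ne').symm
    _ < y / x - 1 := Real.log_lt_sub_one_of_pos (div_pos hy hx) hne
    _ = (y - x) / x := (div_sub_one hx.ne')

lemma lt_logMean {x y : ℝ} (hx : 0 < x) (hxy : x < y) : x < logMean x y := by
  have hlog : 0 < Real.log y - Real.log x := sub_pos.mpr (Real.log_lt_log hx hxy)
  have hupper := log_sub_log_lt_sub_div hx (hx.trans hxy) hxy.ne
  exact (lt_div_comm₀ hlog hx).mp hupper

lemma logMean_lt {x y : ℝ} (hx : 0 < x) (hxy : x < y) : logMean x y < y := by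
  have hy : 0 < y := hx.trans hxy
  have hlog : 0 < Real.log y - Real.log x := sub_pos.mpr (Real.log_lt_log hx hxy)
  have hlower : (y - x) / y < Real.log y - Real.log x := by
    have hswap := log_sub_log_lt_sub_div hy hx hxy.ne'
    rw [← neg_sub y x, neg_div] at hswap
    linarith
  exact (div_lt_comm₀ hy hlog).mp hlower

lemma g0_eq_mul_logMean (c σ2 a b : ℝ) : g0 c σ2 a b = c * σ2 * logMean b⁻¹ a⁻¹ := by
  rw [g0, logMean, Real.log_inv, Real.log_inv, neg_sub_neg, one_div, one_div, mul_div_assoc]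

lemma g0_lt_g0_of_le {c σ2 a b a' b' : ℝ} (hcσ : 0 < c * σ2) (ha : 0 < a) (hab : a < b)
    (hba' : b ≤ a') (hab' : a' < b') : g0 c σ2 a' b' < g0 c σ2 a b := by
  have hb : 0 < b := ha.trans hab
  have ha' : 0 < a' := hb.trans_le hba'
  have hb' : 0 < b' := ha'.trans hab'
  rw [g0_eq_mul_logMean, g0_eq_mul_logMean]
  refine mul_lt_mul_of_pos_left ?_ hcσ
  calc logMean b'⁻¹ a'⁻¹ < a'⁻¹ := logMean_lt (inv_pos.mpr hb') (inv_strictAnti₀ ha' hab')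
    _ ≤ b⁻¹ := inv_anti₀ hb hba'
    _ < logMean b⁻¹ a⁻¹ := lt_logMean (inv_pos.mpr hb) (inv_strictAnti₀ ha hab)

/-- Let `0 < P₁ < P₂ < ⋯ < P_M` with `M ≥ 3`. The consecutive thresholds
`t_k := g₀*(P_k, P_{k+1})`, `k = 1, …, M−1`, form a strictly decreasing
sequence: `t₁ > t₂ > ⋯ > t_{M−1}`. -/
theorem consecutive_thresholds_strict_decreasing (c σ2 : ℝ) (M : ℕ) (P : ℕ → ℝ)
    (hc : 0 < c) (hσ2 : 0 < σ2) (hM : 3 ≤ M)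
    (hP0 : 0 < P 1)
    (hmono : ∀ k, 1 ≤ k → k < M → P k < P (k + 1)) :
    ∀ k l, 1 ≤ k → k < l → l ≤ M - 1 →
      g0 c σ2 (P k) (P (k + 1)) > g0 c σ2 (P l) (P (l + 1)) := by
  intro k l hk hkl hl
  have hP : MonotoneOn P (Set.Icc 1 M) :=
    (strictMonoOn_of_lt_add_one Set.ordConnected_Icc
      fun j _ hj hj' => hmono j hj.1 hj'.2).monotoneOn
  have hPk : 0 < P k := hP0.trans_le (hP ⟨le_rfl, by lia⟩ ⟨hk, by lia⟩ hk)
  have hPkl : P (k + 1) ≤ P l := hP ⟨by lia, by lia⟩ ⟨by lia, by lia⟩ hkl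
  exact g0_lt_g0_of_le (mul_pos hc hσ2) hPk (hmono k hk (by lia)) hPkl (hmono l (by lia) (by lia))
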